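/- Let σ0 > 0 and let a < b be real numbers. For p ≥ 2, let ω_p denote the p-optimal level of the interval [a,b) with respect to φ0 = γ_{0,σ0}, i.e. the unique minimizer over λ ∈ ℝ of ∫_a^b |t − λ|^p φ0(t) dt. Then ω_p → (a+b)/2 as p → ∞. -/

import Mathlib

/-!
Let `m = (a + b) / 2` and `h = (b - a) / 2`. The Gaussian density lies between two positive
constants `c ≤ M` on `[a, b]`, so it plays no role in the exponential growth rate as `p → ∞`.
Testing minimality against `m` bounds the minimal value by `M (b - a) h ^ p`. If `ω p` were at
distance at least `ε` from `m`, one end of `[a, b)` would contain an interval of length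
`δ = min (ε / 2) (b - a)` on which `|t - ω p| ≥ h + ε / 2`, so the minimal value would be at
least `c δ (h + ε / 2) ^ p`. Since `((h + ε / 2) / h) ^ p → ∞`, these two bounds are
incompatible for large `p`.
-/

open MeasureTheory Filter

/-- Centered Gaussian pdf of standard deviation σ. -/
noncomputable def gaussPdf (σ t : ℝ) : ℝ :=
  (2 * Real.pi * σ ^ 2) ^ (-(1:ℝ) / 2) * Real.exp (-(t ^ 2) / (2 * σ ^ 2))

lemma gaussPdf_continuous (σ : ℝ) : Continuous (gaussPdf σ) := by
  unfold gaussPdf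
  fun_prop

lemma gaussPdf_pos {σ : ℝ} (hσ : 0 < σ) (t : ℝ) : 0 < gaussPdf σ t := by
  unfold gaussPdf
  positivity

lemma continuous_abs_rpow_mul {φ : ℝ → ℝ} (hφ : Continuous φ) {p : ℝ} (hp : 0 ≤ p) (x : ℝ) :
    Continuous fun t => |t - x| ^ p * φ t :=
  (Continuous.rpow_const (by fun_prop) fun _ => Or.inr hp).mul hφ

lemma integrableOn_Ico_of_continuous {f : ℝ → ℝ} (hf : Continuous f) (a b : ℝ) :
    IntegrableOn f (Set.Ico a b) :=
  (hf.integrableOn_Icc).mono_set Set.Ico_subset_Icc_self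

lemma setIntegral_Ico_le {f : ℝ → ℝ} (hf : Continuous f) {a b C : ℝ} (hab : a ≤ b)
    (h : ∀ t ∈ Set.Ico a b, f t ≤ C) : ∫ t in Set.Ico a b, f t ≤ (b - a) * C := by
  have := setIntegral_mono_on (integrableOn_Ico_of_continuous hf a b)
    (integrableOn_Ico_of_continuous (continuous_const (y := C)) a b) measurableSet_Ico h
  simpa [hab] using this

lemma le_setIntegral_Ico {f : ℝ → ℝ} (hf : Continuous f) (h0 : ∀ t, 0 ≤ f t) {a b u v C : ℝ}
    (hau : a ≤ u) (huv : u ≤ v) (hvb : v ≤ b) (h : ∀ t ∈ Set.Ico u v, C ≤ f t) :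
    (v - u) * C ≤ ∫ t in Set.Ico a b, f t := by
  have h1 := setIntegral_mono_on (integrableOn_Ico_of_continuous (continuous_const (y := C)) u v)
    (integrableOn_Ico_of_continuous hf u v) measurableSet_Ico h
  have h2 := setIntegral_mono_set (integrableOn_Ico_of_continuous hf a b)
    (Eventually.of_forall h0) (Set.Ico_subset_Ico hau hvb).eventuallyLE
  have h3 : (v - u) * C ≤ ∫ t in Set.Ico u v, f t := by simpa [huv] using h1
  exact h3.trans h2

/-- A level at distance at least `ε` from the midpoint is at distance at least
`(b - a) / 2 + ε / 2` from every point near the opposite end of `[a, b)`, so its cost grows at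
least like `((b - a) / 2 + ε / 2) ^ p`. -/
lemma cost_lower_bound {φ : ℝ → ℝ} (hφ : Continuous φ) (hpos : ∀ t, 0 < φ t)
    {a b c ε p x : ℝ} (hab : a < b) (hε : 0 < ε) (hp : 0 ≤ p) (hc : 0 < c)
    (hcφ : ∀ t ∈ Set.Icc a b, c ≤ φ t) (hx : ε ≤ |x - (a + b) / 2|) :
    min (ε / 2) (b - a) * (((b - a) / 2 + ε / 2) ^ p * c) ≤
      ∫ t in Set.Ico a b, |t - x| ^ p * φ t := by
  have hδ1 := min_le_left (ε / 2) (b - a)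
  have hδ2 := min_le_right (ε / 2) (b - a)
  have hδ : 0 < min (ε / 2) (b - a) := lt_min (by linarith) (by linarith)
  set δ := min (ε / 2) (b - a)
  have hf := continuous_abs_rpow_mul hφ hp x
  have h0 : ∀ t, 0 ≤ |t - x| ^ p * φ t := fun t =>
    mul_nonneg (Real.rpow_nonneg (abs_nonneg _) _) (hpos t).le
  have key : ∀ t ∈ Set.Icc a b, (b - a) / 2 + ε / 2 ≤ |t - x| →
      ((b - a) / 2 + ε / 2) ^ p * c ≤ |t - x| ^ p * φ t := fun t ht h =>
    mul_le_mul (Real.rpow_le_rpow (by linarith) h hp) (hcφ t ht) hc.le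
      (Real.rpow_nonneg (abs_nonneg _) _)
  rcases le_abs.1 hx with h | h
  · have := le_setIntegral_Ico hf h0 le_rfl (by linarith : a ≤ a + δ) (by linarith : a + δ ≤ b)
      (C := ((b - a) / 2 + ε / 2) ^ p * c) fun t ht => key t ⟨ht.1, by linarith [ht.2]⟩
        (le_abs.2 (Or.inr (by linarith [ht.2])))
    simpa using this
  · have := le_setIntegral_Ico hf h0 (by linarith : a ≤ b - δ) (by linarith : b - δ ≤ b) le_rfl
      (C := ((b - a) / 2 + ε / 2) ^ p * c) fun t ht => key t ⟨by linarith [ht.1], ht.2.le⟩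
        (le_abs.2 (Or.inl (by linarith [ht.1])))
    simpa using this

lemma cost_midpoint_le {φ : ℝ → ℝ} (hφ : Continuous φ) (hpos : ∀ t, 0 < φ t)
    {a b M p : ℝ} (hab : a < b) (hp : 0 ≤ p) (hMφ : ∀ t ∈ Set.Icc a b, φ t ≤ M) :
    ∫ t in Set.Ico a b, |t - (a + b) / 2| ^ p * φ t ≤ (b - a) * (((b - a) / 2) ^ p * M) := by
  refine setIntegral_Ico_le (continuous_abs_rpow_mul hφ hp _) hab.le fun t ht => ?_
  have h : |t - (a + b) / 2| ≤ (b - a) / 2 :=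
    abs_le.2 ⟨by linarith [ht.1], by linarith [ht.2]⟩
  exact mul_le_mul (Real.rpow_le_rpow (abs_nonneg _) h hp) (hMφ t ⟨ht.1, ht.2.le⟩) (hpos t).le
    (Real.rpow_nonneg (by linarith) _)

theorem p_optimal_level_tendsto_midpoint
    (σ0 : ℝ) (hσ0 : 0 < σ0) (a b : ℝ) (hab : a < b)
    (ω : ℝ → ℝ)
    (hω : ∀ p : ℝ, 2 ≤ p → ∀ lam : ℝ,
      ∫ t in Set.Ico a b, |t - ω p| ^ p * gaussPdf σ0 t ≤
        ∫ t in Set.Ico a b, |t - lam| ^ p * gaussPdf σ0 t) :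
    Tendsto ω atTop (nhds ((a + b) / 2)) := by
  have hφ := gaussPdf_continuous σ0
  have hpos := gaussPdf_pos hσ0
  have hne : (Set.Icc a b).Nonempty := Set.nonempty_Icc.2 hab.le
  obtain ⟨t₀, -, ht₀⟩ := isCompact_Icc.exists_isMinOn hne hφ.continuousOn
  obtain ⟨t₁, -, ht₁⟩ := isCompact_Icc.exists_isMaxOn hne hφ.continuousOn
  set c := gaussPdf σ0 t₀
  set M := gaussPdf σ0 t₁
  have hc : 0 < c := hpos t₀
  rw [Metric.tendsto_atTop']
  intro ε hε
  have hh : 0 < (b - a) / 2 := by linarith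
  have hδ : 0 < min (ε / 2) (b - a) := lt_min (by linarith) (by linarith)
  set δ := min (ε / 2) (b - a)
  have hr : 1 < ((b - a) / 2 + ε / 2) / ((b - a) / 2) := by
    rw [one_lt_div hh]; linarith
  have hlim := tendsto_rpow_atTop_of_base_gt_one _ hr
  obtain ⟨N, hN⟩ := eventually_atTop.1
    (hlim.eventually_gt_atTop ((b - a) * M / (δ * c)))
  refine ⟨max N 2, fun p hp => ?_⟩
  have hp2 : 2 ≤ p := (le_max_right _ _).trans hp.le
  have hp0 : 0 ≤ p := by linarith
  by_contra hcon
  rw [Real.dist_eq, not_lt] at hcon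
  have h1 := cost_lower_bound hφ hpos hab hε hp0 hc (fun t ht => ht₀ ht) hcon
  have h2 := cost_midpoint_le hφ hpos hab hp0 (fun t ht => ht₁ ht)
  have h3 := h1.trans ((hω p hp2 _).trans h2)
  have h4 := hN p ((le_max_left _ _).trans hp.le)
  rw [Real.div_rpow (by linarith) hh.le,
    div_lt_div_iff₀ (mul_pos hδ hc) (Real.rpow_pos_of_pos hh p)] at h4
  linarith
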